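/- For every n ≥ 2 and every ε > 0 there exist a bounded open convex set Ω ⊂ ℝⁿ with nonempty interior and a positive convex function f on the closure of Ω such that (1/|Ω|) ∫_Ω f dx ≥ (n − 1 − ε) · (1/|∂Ω|) ∫_{∂Ω} f dσ. Consequently the optimal constant c_n in the Hermite–Hadamard inequality for positive convex (hence also for positive subharmonic) functions satisfies c_n ≥ n − 1. -/

import Mathlib

open MeasureTheory

/-!
Let `K ⊂ ℝᵐ` be the corner simplex `{y > 0, ∑ yᵢ < 1}`, where `n = m + 1`, and let `Ω` be the
simplex of height `η` over `K` with apex above the vertex `0`, i.e. the region under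
`η (1 - ∑ yᵢ)`. For a function of the base point `y` alone, the mean over `Ω` is `n` times the mean
of `(1 - ∑ yᵢ) F` over `K`, because a cone has an `n`-th of the volume of the cylinder. If `F` is
concentrated near the vertex `0`, which convexity permits, the weight `1 - ∑ yᵢ` is close to `1`
there. As `η → 0` the boundary of `Ω` collapses to two copies of `K`, so the boundary mean tends to
the mean of `F` over `K` and the ratio of the two means approaches `n`.
-/

open Set Filter Topology
open scoped NNReal ENNReal Pointwise

namespace HermiteHadamard

/-! ### Regions between two graphs -/

section RegionBetween

variable {X : Type*} {f g : X → ℝ} {s : Set X}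

lemma convex_regionBetween [AddCommGroup X] [Module ℝ X] (hf : ConvexOn ℝ s f)
    (hg : ConcaveOn ℝ s g) : Convex ℝ (regionBetween f g s) := by
  have heq : regionBetween f g s =
      {p : X × ℝ | p.1 ∈ s ∧ f p.1 < p.2} ∩ {p | p.1 ∈ s ∧ p.2 < g p.1} := by
    ext p
    simp only [regionBetween, mem_ofPred_eq, mem_Ioo, mem_inter_iff]
    tauto
  rw [heq]
  exact hf.convex_strict_epigraph.inter hg.convex_strict_hypograph

variable [TopologicalSpace X]

lemma isOpen_regionBetween (hs : IsOpen s) (hf : Continuous f) (hg : Continuous g) :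
    IsOpen (regionBetween f g s) :=
  (hs.preimage continuous_fst).inter
    ((isOpen_lt (hf.comp continuous_fst) continuous_snd).inter
      (isOpen_lt continuous_snd (hg.comp continuous_fst)))

lemma closure_regionBetween_subset (hf : Continuous f) (hg : Continuous g) :
    closure (regionBetween f g s) ⊆ {p | p.1 ∈ closure s ∧ p.2 ∈ Icc (f p.1) (g p.1)} := by
  refine closure_minimal (fun p hp ↦ ⟨subset_closure hp.1, Ioo_subset_Icc_self hp.2⟩) ?_
  exact (isClosed_closure.preimage continuous_fst).inter
    ((isClosed_le (hf.comp continuous_fst) continuous_snd).inter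
      (isClosed_le continuous_snd (hg.comp continuous_fst)))

lemma mk_mem_closure_regionBetween {x : X} (hx : x ∈ s) (hfg : f x < g x) {t : ℝ}
    (ht : t ∈ Icc (f x) (g x)) : (x, t) ∈ closure (regionBetween f g s) := by
  have hmaps : MapsTo (Prod.mk x) (Ioo (f x) (g x)) (regionBetween f g s) := fun _ ht ↦ ⟨hx, ht⟩
  rw [← closure_Ioo hfg.ne] at ht
  exact hmaps.closure (Continuous.prodMk_right x) ht

lemma mk_left_mem_frontier_regionBetween {x : X} (hx : x ∈ s) (hfg : f x < g x) :
    (x, f x) ∈ frontier (regionBetween f g s) :=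
  ⟨mk_mem_closure_regionBetween hx hfg (left_mem_Icc.2 hfg.le),
    fun h ↦ (interior_subset h).2.1.false⟩

lemma mk_right_mem_frontier_regionBetween {x : X} (hx : x ∈ s) (hfg : f x < g x) :
    (x, g x) ∈ frontier (regionBetween f g s) :=
  ⟨mk_mem_closure_regionBetween hx hfg (right_mem_Icc.2 hfg.le),
    fun h ↦ (interior_subset h).2.2.false⟩

end RegionBetween

section RegionBetweenMeasure

variable {X : Type*} [MeasurableSpace X] {μ : Measure X} [SFinite μ] {f g : X → ℝ} {s : Set X}

lemma map_fst_restrict_regionBetween (hf : Measurable f) (hg : Measurable g)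
    (hs : MeasurableSet s) :
    ((μ.prod volume).restrict (regionBetween f g s)).map Prod.fst =
      (μ.restrict s).withDensity fun x ↦ ENNReal.ofReal (g x - f x) := by
  ext t ht
  have heq : Prod.fst ⁻¹' t ∩ regionBetween f g s = regionBetween f g (t ∩ s) := by
    ext p
    simp [regionBetween, and_assoc]
  rw [Measure.map_apply measurable_fst ht, Measure.restrict_apply (measurable_fst ht), heq,
    volume_regionBetween_eq_lintegral hf.aemeasurable hg.aemeasurable (ht.inter hs),
    withDensity_apply _ ht, Measure.restrict_restrict ht]
  rfl

lemma setIntegral_regionBetween_comp_fst (hf : Measurable f) (hg : Measurable g)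
    (hs : MeasurableSet s) (hfg : ∀ x ∈ s, f x ≤ g x) {F : X → ℝ} (hF : Measurable F) :
    ∫ p in regionBetween f g s, F p.1 ∂μ.prod volume = ∫ x in s, (g x - f x) * F x ∂μ := by
  rw [← integral_map measurable_fst.aemeasurable hF.aestronglyMeasurable,
    map_fst_restrict_regionBetween hf hg hs,
    integral_withDensity_eq_integral_toReal_smul (by fun_prop) (by simp)]
  refine setIntegral_congr_fun hs fun x hx ↦ ?_
  simp [ENNReal.toReal_ofReal (sub_nonneg.2 (hfg x hx))]

end RegionBetweenMeasure

/-! ### Graphs over coordinate hyperplanes -/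

section GraphMap

variable {m : ℕ}

/-- The splitting of `ℝᵐ⁺¹` into the hyperplane of the coordinates other than the `i`-th and the
`i`-th coordinate line. The target carries the sup product metric, so this is a linear
homeomorphism but not an isometry. -/
noncomputable def splitCoord (i : Fin (m + 1)) :
    EuclideanSpace ℝ (Fin (m + 1)) ≃L[ℝ] EuclideanSpace ℝ (Fin m) × ℝ :=
  LinearEquiv.toContinuousLinearEquiv
    { toFun z := (WithLp.toLp 2 (i.removeNth z.ofLp), z i)
      invFun p := WithLp.toLp 2 (i.insertNth p.2 p.1.ofLp)
      map_add' _ _ := rfl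
      map_smul' _ _ := rfl
      left_inv z := by simp
      right_inv p := by simp }

@[simp]
lemma splitCoord_fst_apply (i : Fin (m + 1)) (z : EuclideanSpace ℝ (Fin (m + 1))) (j : Fin m) :
    (splitCoord i z).1 j = z (i.succAbove j) := rfl

@[simp]
lemma splitCoord_snd (i : Fin (m + 1)) (z : EuclideanSpace ℝ (Fin (m + 1))) :
    (splitCoord i z).2 = z i := rfl

lemma dist_sq_eq_splitCoord (i : Fin (m + 1)) (z w : EuclideanSpace ℝ (Fin (m + 1))) :
    dist z w ^ 2 =
      dist (splitCoord i z).2 (splitCoord i w).2 ^ 2 +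
        dist (splitCoord i z).1 (splitCoord i w).1 ^ 2 := by
  simp only [EuclideanSpace.dist_sq_eq, Fin.sum_univ_succAbove _ i, splitCoord_fst_apply,
    splitCoord_snd]

/-- The parametrization of the graph of `h` over the hyperplane of the coordinates other than the
`i`-th. -/
noncomputable def graphMap (i : Fin (m + 1)) (h : EuclideanSpace ℝ (Fin m) → ℝ)
    (y : EuclideanSpace ℝ (Fin m)) : EuclideanSpace ℝ (Fin (m + 1)) :=
  (splitCoord i).symm (y, h y)

@[simp]
lemma splitCoord_graphMap (i : Fin (m + 1)) (h : EuclideanSpace ℝ (Fin m) → ℝ)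
    (y : EuclideanSpace ℝ (Fin m)) : splitCoord i (graphMap i h y) = (y, h y) :=
  (splitCoord i).apply_symm_apply _

@[simp]
lemma graphMap_apply_self (i : Fin (m + 1)) (h : EuclideanSpace ℝ (Fin m) → ℝ)
    (y : EuclideanSpace ℝ (Fin m)) : graphMap i h y i = h y := by
  rw [← splitCoord_snd, splitCoord_graphMap]

lemma mem_image_graphMap {i : Fin (m + 1)} {h : EuclideanSpace ℝ (Fin m) → ℝ}
    {s : Set (EuclideanSpace ℝ (Fin m))} {z : EuclideanSpace ℝ (Fin (m + 1))}
    (hs : (splitCoord i z).1 ∈ s) (hz : z i = h (splitCoord i z).1) : z ∈ graphMap i h '' s := by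
  refine ⟨_, hs, (splitCoord i).injective ?_⟩
  rw [splitCoord_graphMap, ← hz, ← splitCoord_snd]

lemma dist_sq_graphMap (i : Fin (m + 1)) (h : EuclideanSpace ℝ (Fin m) → ℝ)
    (x y : EuclideanSpace ℝ (Fin m)) :
    dist (graphMap i h x) (graphMap i h y) ^ 2 = dist (h x) (h y) ^ 2 + dist x y ^ 2 := by
  simp only [dist_sq_eq_splitCoord i, splitCoord_graphMap]

lemma antilipschitzWith_graphMap (i : Fin (m + 1)) (h : EuclideanSpace ℝ (Fin m) → ℝ) :
    AntilipschitzWith 1 (graphMap i h) := by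
  refine AntilipschitzWith.of_le_mul_dist fun x y ↦ ?_
  rw [NNReal.coe_one, one_mul]
  refine le_of_sq_le_sq ?_ dist_nonneg
  rw [dist_sq_graphMap]
  exact le_add_of_nonneg_left (sq_nonneg _)

lemma lipschitzWith_graphMap (i : Fin (m + 1)) {h : EuclideanSpace ℝ (Fin m) → ℝ} {L : ℝ≥0}
    (hh : LipschitzWith L h) : LipschitzWith (1 + L) (graphMap i h) := by
  refine LipschitzWith.of_dist_le_mul fun x y ↦ le_of_sq_le_sq ?_ (by positivity)
  calc dist (graphMap i h x) (graphMap i h y) ^ 2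
      = dist (h x) (h y) ^ 2 + dist x y ^ 2 := dist_sq_graphMap i h x y
    _ ≤ (L * dist x y) ^ 2 + dist x y ^ 2 := by gcongr; exact hh.dist_le_mul x y
    _ ≤ (L * dist x y + dist x y) ^ 2 := by
        nlinarith [mul_nonneg L.coe_nonneg (sq_nonneg (dist x y))]
    _ = ((1 + L : ℝ≥0) * dist x y) ^ 2 := by push_cast; ring

lemma hausdorffMeasure_image_graphMap_zero_le (i : Fin (m + 1))
    (s : Set (EuclideanSpace ℝ (Fin m))) : μH[m] (graphMap i 0 '' s) ≤ μH[m] s := by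
  simpa using (lipschitzWith_graphMap (h := 0) i (LipschitzWith.const 0)).hausdorffMeasure_image_le
    m.cast_nonneg s

lemma setLIntegral_image_hausdorffMeasure_le {X Y : Type*} [EMetricSpace X] [MeasurableSpace X]
    [BorelSpace X] [EMetricSpace Y] [MeasurableSpace Y] [BorelSpace Y] {φ : X → Y} {K : ℝ≥0}
    (hφ : LipschitzWith K φ) {d : ℝ} (hd : 0 ≤ d) (s : Set X) {F : Y → ℝ≥0∞} (hF : Measurable F) :
    ∫⁻ y in φ '' s, F y ∂μH[d] ≤ (K : ℝ≥0∞) ^ d * ∫⁻ x in s, F (φ x) ∂μH[d] := by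
  have hφm : Measurable φ := hφ.continuous.measurable
  have hle : (μH[d] : Measure Y).restrict (φ '' s) ≤
      (K : ℝ≥0∞) ^ d • (μH[d].restrict s).map φ := by
    refine Measure.le_iff.2 fun t ht ↦ ?_
    rw [Measure.restrict_apply ht, Measure.smul_apply, Measure.map_apply hφm ht,
      Measure.restrict_apply (hφm ht), smul_eq_mul, ← image_preimage_inter]
    exact hφ.hausdorffMeasure_image_le hd _
  calc ∫⁻ y in φ '' s, F y ∂μH[d]
      ≤ ∫⁻ y, F y ∂((K : ℝ≥0∞) ^ d • (μH[d].restrict s).map φ) := lintegral_mono' hle le_rfl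
    _ = (K : ℝ≥0∞) ^ d * ∫⁻ x in s, F (φ x) ∂μH[d] := by
        rw [lintegral_smul_measure, lintegral_map hF hφm, smul_eq_mul]

lemma setLIntegral_image_graphMap_le (i : Fin (m + 1)) {h : EuclideanSpace ℝ (Fin m) → ℝ} {L : ℝ≥0}
    (hh : LipschitzWith L h) (s : Set (EuclideanSpace ℝ (Fin m)))
    {F : EuclideanSpace ℝ (Fin m) → ℝ≥0∞} (hF : Measurable F) :
    ∫⁻ z in graphMap i h '' s, F (splitCoord i z).1 ∂μH[m] ≤
      (1 + L : ℝ≥0∞) ^ m * ∫⁻ y in s, F y ∂μH[m] := by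
  have hF' : Measurable fun z ↦ F (splitCoord i z).1 :=
    hF.comp (continuous_fst.comp (splitCoord i).continuous).measurable
  simpa using
    setLIntegral_image_hausdorffMeasure_le (lipschitzWith_graphMap i hh) m.cast_nonneg s hF'

lemma two_mul_hausdorffMeasure_le_frontier (i : Fin (m + 1)) {f g : EuclideanSpace ℝ (Fin m) → ℝ}
    {s : Set (EuclideanSpace ℝ (Fin m))} (hf : Measurable f) (hfg : ∀ y ∈ s, f y < g y) :
    2 * μH[m] s ≤ μH[m] (frontier (splitCoord i ⁻¹' regionBetween f g s)) := by
  have hle (h : EuclideanSpace ℝ (Fin m) → ℝ) : μH[m] s ≤ μH[m] (graphMap i h '' s) := by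
    simpa using (antilipschitzWith_graphMap i h).le_hausdorffMeasure_image m.cast_nonneg s
  have hsplit : Measurable (splitCoord i : _ → EuclideanSpace ℝ (Fin m) × ℝ) :=
    (splitCoord i).continuous.measurable
  have hmeas : MeasurableSet {z | z i = f (splitCoord i z).1} :=
    measurableSet_eq_fun hsplit.snd (hf.comp hsplit.fst)
  have hfrontier : frontier (splitCoord i ⁻¹' regionBetween f g s) =
      splitCoord i ⁻¹' frontier (regionBetween f g s) :=
    ((splitCoord i).toHomeomorph.preimage_frontier _).symm
  rw [hfrontier, ← measure_inter_add_sdiff _ hmeas, two_mul]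
  refine add_le_add ((hle f).trans (measure_mono ?_)) ((hle g).trans (measure_mono ?_))
  · rintro _ ⟨y, hy, rfl⟩
    refine ⟨?_, ?_⟩
    · simpa using mk_left_mem_frontier_regionBetween hy (hfg y hy)
    · simp
  · rintro _ ⟨y, hy, rfl⟩
    refine ⟨?_, ?_⟩
    · simpa using mk_right_mem_frontier_regionBetween hy (hfg y hy)
    · simpa using (hfg y hy).ne'

lemma exists_map_splitCoord_eq_smul_prod (i : Fin (m + 1))
    (ν : Measure (EuclideanSpace ℝ (Fin (m + 1)))) [ν.IsAddHaarMeasure]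
    (μ : Measure (EuclideanSpace ℝ (Fin m))) [μ.IsAddHaarMeasure] :
    ∃ c : ℝ≥0, c ≠ 0 ∧ ν.map (splitCoord i) = c • μ.prod volume := by
  have : (ν.map (splitCoord i)).IsAddHaarMeasure :=
    (splitCoord i).isAddHaarMeasure_map ν
  exact ⟨_, (Measure.addHaarScalarFactor_pos_of_isAddHaarMeasure _ _).ne',
    Measure.isAddLeftInvariant_eq_smul _ _⟩

end GraphMap

/-! ### Haar measure of cones and of closures of convex sets -/

lemma integral_Ioo_one_sub_pow (k : ℕ) : ∫ t in Ioo (0 : ℝ) 1, (1 - t) ^ k = 1 / (k + 1) := by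
  rw [← integral_Ioc_eq_integral_Ioo, ← intervalIntegral.integral_of_le zero_le_one,
    intervalIntegral.integral_comp_sub_left (fun t ↦ t ^ k) 1]
  simp

section Haar

variable {V : Type*} [NormedAddCommGroup V] [NormedSpace ℝ V] [FiniteDimensional ℝ V]
  [MeasurableSpace V] [BorelSpace V] (μ : Measure V) [μ.IsAddHaarMeasure]

lemma setIntegral_one_sub_of_forall_lt_eq_smul {K : Set V} {p : V → ℝ} (hK : MeasurableSet K)
    (hp : IntegrableOn (fun y ↦ 1 - p y) K μ) (hmem : ∀ y ∈ K, p y ∈ Icc 0 1)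
    (hslice : ∀ t ∈ Ioo (0 : ℝ) 1, {y ∈ K | p y < t} = t • K) :
    ∫ y in K, (1 - p y) ∂μ = μ.real K / (Module.finrank ℝ V + 1) := by
  -- Layer-cake formula: the superlevel sets of `1 - p` are the dilates `(1 - t) • K`.
  have hnonneg : 0 ≤ᵐ[μ.restrict K] fun y ↦ 1 - p y :=
    ae_restrict_of_forall_mem hK fun y hy ↦ sub_nonneg.2 (hmem y hy).2
  have hlevel (t : ℝ) : (μ.restrict K).real {y | t < 1 - p y} = μ.real {y ∈ K | p y < 1 - t} := by
    rw [measureReal_restrict_apply' hK, inter_comm]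
    simp only [lt_sub_comm (a := t)]
    rfl
  have hzero (t : ℝ) (ht : 1 ≤ t) : μ.real {y ∈ K | p y < 1 - t} = 0 := by
    have hempty : {y ∈ K | p y < 1 - t} = ∅ :=
      eq_empty_of_forall_notMem fun y ⟨hy, hlt⟩ ↦ by linarith [(hmem y hy).1]
    rw [hempty, measureReal_empty]
  calc ∫ y in K, (1 - p y) ∂μ
      = ∫ t in Ioi 0, μ.real {y ∈ K | p y < 1 - t} := by
        simp only [hp.integral_eq_integral_meas_lt hnonneg, hlevel]
    _ = ∫ t in Ioo 0 1, μ.real {y ∈ K | p y < 1 - t} :=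
        setIntegral_eq_of_subset_of_forall_sdiff_eq_zero measurableSet_Ioi Ioo_subset_Ioi_self
          fun t ht ↦ hzero t (not_lt.1 fun hlt ↦ ht.2 ⟨ht.1, hlt⟩)
    _ = ∫ t in Ioo 0 1, (1 - t) ^ Module.finrank ℝ V * μ.real K := by
        refine setIntegral_congr_fun measurableSet_Ioo fun t ht ↦ ?_
        have h1t : 0 ≤ 1 - t := sub_nonneg.2 ht.2.le
        simp only [hslice (1 - t) ⟨sub_pos.2 ht.2, sub_lt_self 1 ht.1⟩, measureReal_def,
          Measure.addHaar_smul_of_nonneg μ h1t, ENNReal.toReal_mul,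
          ENNReal.toReal_ofReal (pow_nonneg h1t _)]
    _ = μ.real K / (Module.finrank ℝ V + 1) := by
        rw [integral_mul_const, integral_Ioo_one_sub_pow, one_div_mul_eq_div]

lemma setLIntegral_closure_of_convex {s : Set V} (hs : Convex ℝ s) (F : V → ℝ≥0∞) :
    ∫⁻ y in closure s, F y ∂μ = ∫⁻ y in s, F y ∂μ :=
  setLIntegral_congr (closure_ae_eq_of_null_frontier (hs.addHaar_frontier μ))

end Haar

/-! ### The corner simplex -/

lemma isClosed_preimage_ofLp_Icc {ι : Type*} (a b : ι → ℝ) :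
    IsClosed (WithLp.ofLp ⁻¹' Icc a b : Set (EuclideanSpace ℝ ι)) :=
  isClosed_Icc.preimage (PiLp.continuous_ofLp 2 _)

lemma isBounded_preimage_ofLp_Icc {ι : Type*} [Finite ι] (a b : ι → ℝ) :
    Bornology.IsBounded (WithLp.ofLp ⁻¹' Icc a b : Set (EuclideanSpace ℝ ι)) := by
  have := Fintype.ofFinite ι
  exact (EuclideanSpace.equiv ι ℝ).antilipschitz.isBounded_preimage (Metric.isBounded_Icc a b)

section CornerSimplex

variable (m : ℕ)

/-- The sum of the coordinates as a continuous linear functional; it vanishes at the vertex `0` of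
`cornerSimplex m` and equals `1` on the opposite facet. -/
noncomputable def coordSum : EuclideanSpace ℝ (Fin m) →L[ℝ] ℝ :=
  ∑ i, EuclideanSpace.proj i

/-- The open simplex in `ℝᵐ` with vertices `0, e₁, …, eₘ`, the base of `thinSimplex m η`. -/
def cornerSimplex : Set (EuclideanSpace ℝ (Fin m)) :=
  {y | (∀ i, 0 < y i) ∧ coordSum m y < 1}

variable {m}

lemma coordSum_apply (y : EuclideanSpace ℝ (Fin m)) : coordSum m y = ∑ i, y i := by
  simp [coordSum]

lemma coordSum_nonneg {y : EuclideanSpace ℝ (Fin m)} (hy : ∀ i, 0 ≤ y i) : 0 ≤ coordSum m y := by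
  rw [coordSum_apply]
  exact Finset.sum_nonneg fun i _ ↦ hy i

lemma isOpen_cornerSimplex : IsOpen (cornerSimplex m) := by
  simp only [cornerSimplex, ofPred_and, ofPred_forall]
  exact (isOpen_iInter_of_finite fun i ↦ isOpen_lt continuous_const (by fun_prop)).inter
    (isOpen_lt (by fun_prop) continuous_const)

lemma convex_cornerSimplex : Convex ℝ (cornerSimplex m) := by
  simp only [cornerSimplex, ofPred_and, ofPred_forall]
  exact (convex_iInter fun i ↦
      convex_halfSpace_gt (EuclideanSpace.proj (𝕜 := ℝ) i).toLinearMap.isLinear 0).inter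
    (convex_halfSpace_lt (coordSum m).toLinearMap.isLinear 1)

lemma closure_cornerSimplex_subset :
    closure (cornerSimplex m) ⊆ {y | (∀ i, 0 ≤ y i) ∧ coordSum m y ≤ 1} := by
  refine closure_minimal (fun y hy ↦ ⟨fun i ↦ (hy.1 i).le, hy.2.le⟩) ?_
  simp only [ofPred_and, ofPred_forall]
  exact (isClosed_iInter fun i ↦ isClosed_le continuous_const (by fun_prop)).inter
    (isClosed_le (by fun_prop) continuous_const)

lemma exists_mem_cornerSimplex_coordSum_lt {δ : ℝ} (hδ : 0 < δ) :
    ∃ y ∈ cornerSimplex m, coordSum m y < δ := by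
  have htendsto : Tendsto (fun t : ℝ ↦ coordSum m (WithLp.toLp 2 fun _ ↦ t)) (𝓝[>] 0) (𝓝 0) := by
    refine tendsto_nhdsWithin_of_tendsto_nhds (Continuous.tendsto' (by fun_prop) _ _ ?_)
    simp [coordSum_apply]
  have hlt := htendsto.eventually_lt_const (lt_min hδ one_pos)
  obtain ⟨t, ht, htpos⟩ := (hlt.and self_mem_nhdsWithin).exists
  exact ⟨_, ⟨fun _ ↦ htpos, ht.trans_le (min_le_right _ _)⟩, ht.trans_le (min_le_left _ _)⟩

lemma smul_cornerSimplex {t : ℝ} (ht : t ∈ Ioo (0 : ℝ) 1) :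
    t • cornerSimplex m = {y ∈ cornerSimplex m | coordSum m y < t} := by
  ext y
  simp only [mem_smul_set_iff_inv_smul_mem₀ ht.1.ne', cornerSimplex, mem_ofPred_eq, map_smul,
    PiLp.smul_apply, smul_eq_mul, inv_mul_lt_one₀ ht.1, mul_pos_iff_of_pos_left (inv_pos.2 ht.1)]
  exact ⟨fun h ↦ ⟨⟨h.1, h.2.trans ht.2⟩, h.2⟩, fun h ↦ ⟨h.1.1, h.2⟩⟩

lemma coord_le_coordSum {y : EuclideanSpace ℝ (Fin m)} (hy : ∀ i, 0 ≤ y i) (i : Fin m) :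
    y i ≤ coordSum m y := by
  rw [coordSum_apply]
  exact Finset.single_le_sum (fun j _ ↦ hy j) (Finset.mem_univ i)

lemma isBounded_cornerSimplex : Bornology.IsBounded (cornerSimplex m) :=
  (isBounded_preimage_ofLp_Icc 0 1).subset fun _ hy ↦
    ⟨fun i ↦ (hy.1 i).le, fun i ↦ (coord_le_coordSum (fun j ↦ (hy.1 j).le) i).trans hy.2.le⟩

section Haar

variable (μ : Measure (EuclideanSpace ℝ (Fin m))) [μ.IsAddHaarMeasure]

lemma measure_cornerSimplex_ne_top : μ (cornerSimplex m) ≠ ∞ :=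
  isBounded_cornerSimplex.measure_lt_top.ne

lemma measureReal_cornerSimplex_pos : 0 < μ.real (cornerSimplex m) := by
  obtain ⟨y, hy, -⟩ := exists_mem_cornerSimplex_coordSum_lt (m := m) one_pos
  exact ENNReal.toReal_pos (isOpen_cornerSimplex.measure_pos μ ⟨y, hy⟩).ne'
    (measure_cornerSimplex_ne_top μ)

lemma integrableOn_cornerSimplex_of_continuous {F : EuclideanSpace ℝ (Fin m) → ℝ}
    (hF : Continuous F) : IntegrableOn F (cornerSimplex m) μ :=
  (hF.continuousOn.integrableOn_compact isBounded_cornerSimplex.isCompact_closure).mono_set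
    subset_closure

lemma setIntegral_cornerSimplex_one_sub_coordSum :
    ∫ y in cornerSimplex m, (1 - coordSum m y) ∂μ = μ.real (cornerSimplex m) / (m + 1) := by
  have hcone := setIntegral_one_sub_of_forall_lt_eq_smul μ (p := coordSum m)
    isOpen_cornerSimplex.measurableSet
    (integrableOn_cornerSimplex_of_continuous μ (by fun_prop))
    (fun y hy ↦ ⟨coordSum_nonneg fun i ↦ (hy.1 i).le, hy.2.le⟩)
    (fun t ht ↦ (smul_cornerSimplex ht).symm)
  rwa [finrank_euclideanSpace_fin] at hcone

end Haar

end CornerSimplex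

/-! ### The thin simplex -/

section ThinSimplex

variable {m : ℕ} {η : ℝ≥0}

/-- The open simplex in `ℝᵐ⁺¹` of height `η` over `cornerSimplex m`, with apex above the vertex
`0`; the height is measured by the coordinate with index `0`. -/
def thinSimplex (m : ℕ) (η : ℝ≥0) : Set (EuclideanSpace ℝ (Fin (m + 1))) :=
  splitCoord 0 ⁻¹' regionBetween 0 (fun y ↦ η * (1 - coordSum m y)) (cornerSimplex m)

/-- The closed box `[0, η] × [0, 1]ᵐ`. It contains `thinSimplex m η`, and its intersections with
the coordinate hyperplanes cover the lateral facets, whose measure is therefore `O(η)`. -/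
def thinBox (m : ℕ) (η : ℝ≥0) : Set (EuclideanSpace ℝ (Fin (m + 1))) :=
  WithLp.ofLp ⁻¹' Icc 0 (Fin.cons η 1)

lemma isOpen_thinSimplex : IsOpen (thinSimplex m η) :=
  (isOpen_regionBetween isOpen_cornerSimplex continuous_const (by fun_prop)).preimage
    (splitCoord 0).continuous

lemma convex_thinSimplex : Convex ℝ (thinSimplex m η) := by
  have hconcave : ConcaveOn ℝ (cornerSimplex m) fun y ↦ (η : ℝ) * (1 - coordSum m y) :=
    ((concaveOn_const 1 convex_cornerSimplex).sub
      ((coordSum m).toLinearMap.convexOn convex_cornerSimplex)).smul η.coe_nonneg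
  exact (convex_regionBetween (convexOn_const 0 convex_cornerSimplex) hconcave).linear_preimage
    (splitCoord 0).toLinearMap

lemma mul_one_sub_coordSum_pos (hη : 0 < η) {y : EuclideanSpace ℝ (Fin m)}
    (hy : y ∈ cornerSimplex m) : 0 < η * (1 - coordSum m y) :=
  mul_pos hη (sub_pos.2 hy.2)

lemma thinSimplex_nonempty (hη : 0 < η) : (thinSimplex m η).Nonempty := by
  obtain ⟨y, hy, -⟩ := exists_mem_cornerSimplex_coordSum_lt (m := m) one_pos
  obtain ⟨t, ht⟩ := nonempty_Ioo.2 (mul_one_sub_coordSum_pos hη hy)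
  exact ⟨(splitCoord 0).symm (y, t), by simpa [thinSimplex] using ⟨hy, ht⟩⟩

lemma closure_thinSimplex_subset : closure (thinSimplex m η) ⊆
    {z | (splitCoord 0 z).1 ∈ closure (cornerSimplex m) ∧
      z 0 ∈ Icc 0 (η * (1 - coordSum m (splitCoord 0 z).1))} := by
  have hclosure : closure (thinSimplex m η) = splitCoord 0 ⁻¹' closure
      (regionBetween 0 (fun y ↦ η * (1 - coordSum m y)) (cornerSimplex m)) :=
    ((splitCoord 0).toHomeomorph.preimage_closure _).symm
  rw [hclosure]
  exact fun z hz ↦ closure_regionBetween_subset continuous_const (by fun_prop) hz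

lemma closure_thinSimplex_subset_thinBox : closure (thinSimplex m η) ⊆ thinBox m η := by
  intro z hz
  obtain ⟨hbase, hheight⟩ := closure_thinSimplex_subset hz
  obtain ⟨hnonneg, hle⟩ := closure_cornerSimplex_subset hbase
  have hη : η * (1 - coordSum m (splitCoord 0 z).1) ≤ η :=
    mul_le_of_le_one_right η.coe_nonneg (sub_le_self 1 (coordSum_nonneg hnonneg))
  refine ⟨?_, ?_⟩ <;> refine Pi.le_def.2 (Fin.cases ?_ fun i ↦ ?_)
  · exact hheight.1
  · exact hnonneg i
  · exact hheight.2.trans hη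
  · exact (coord_le_coordSum hnonneg i).trans hle

lemma isBounded_thinSimplex : Bornology.IsBounded (thinSimplex m η) :=
  (isBounded_preimage_ofLp_Icc _ _).subset
    (subset_closure.trans closure_thinSimplex_subset_thinBox)

lemma setAverage_thinSimplex_comp_splitCoord (hη : 0 < η)
    (ν : Measure (EuclideanSpace ℝ (Fin (m + 1)))) [ν.IsAddHaarMeasure]
    (μ : Measure (EuclideanSpace ℝ (Fin m))) [μ.IsAddHaarMeasure]
    {F : EuclideanSpace ℝ (Fin m) → ℝ} (hF : Measurable F) :
    ⨍ z in thinSimplex m η, F (splitCoord 0 z).1 ∂ν =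
      (m + 1) * ⨍ y in cornerSimplex m, (1 - coordSum m y) * F y ∂μ := by
  obtain ⟨c, hc, hmap⟩ := exists_map_splitCoord_eq_smul_prod 0 ν μ
  have hfubini {G : EuclideanSpace ℝ (Fin m) → ℝ} (hG : Measurable G) :
      ∫ z in thinSimplex m η, G (splitCoord 0 z).1 ∂ν =
        c * η * ∫ y in cornerSimplex m, (1 - coordSum m y) * G y ∂μ := by
    have hemb : MeasurableEmbedding (splitCoord (m := m) 0) :=
      (splitCoord 0).toHomeomorph.measurableEmbedding
    rw [thinSimplex, ← hemb.setIntegral_map (fun p ↦ G p.1), hmap, Measure.restrict_smul,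
      integral_smul_nnreal_measure,
      setIntegral_regionBetween_comp_fst measurable_zero (by fun_prop)
        isOpen_cornerSimplex.measurableSet (fun y hy ↦ (mul_one_sub_coordSum_pos hη hy).le) hG]
    simp [mul_assoc, integral_const_mul, NNReal.smul_def]
  have hvolume : ν.real (thinSimplex m η) = c * η * (μ.real (cornerSimplex m) / (m + 1)) := by
    simpa [setIntegral_cornerSimplex_one_sub_coordSum] using hfubini (measurable_const (a := 1))
  have hK := measureReal_cornerSimplex_pos μ
  rw [setAverage_eq, setAverage_eq, hvolume, hfubini hF, smul_eq_mul, smul_eq_mul]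
  have hη' : (η : ℝ) ≠ 0 := by exact_mod_cast hη.ne'
  have hc' : (c : ℝ) ≠ 0 := by exact_mod_cast hc
  field_simp

lemma volume_thinBox : volume (thinBox m η) = η := by
  rw [thinBox, (PiLp.volume_preserving_ofLp _).measure_preimage measurableSet_Icc.nullMeasurableSet,
    Real.volume_Icc_pi, Fin.prod_univ_succ]
  simp

lemma thinBox_inter_subset_image_graphMap (i : Fin (m + 1)) :
    thinBox (m + 1) η ∩ {z | z i.succ = 0} ⊆ graphMap i.succ 0 '' thinBox m η := by
  rintro z ⟨⟨hnonneg, hle⟩, hi⟩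
  refine mem_image_graphMap ⟨fun j ↦ hnonneg _, ?_⟩ hi
  refine Pi.le_def.2 (Fin.cases ?_ fun j ↦ ?_)
  · simpa using hle (i.succ.succAbove 0)
  · simpa [Fin.succ_succAbove_succ] using hle (i.succ.succAbove j.succ)

lemma exists_hausdorffMeasure_thinBox_inter_le (m : ℕ) : ∃ C : ℝ≥0, ∀ (η : ℝ≥0) (i : Fin m),
    μH[m] (thinBox m η ∩ {z | z i.succ = 0}) ≤ C * η := by
  cases m with
  | zero => exact ⟨0, fun _ i ↦ i.elim0⟩
  | succ k =>
    obtain ⟨C, hC⟩ : ∃ C : ℝ≥0,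
        (μH[(k + 1 : ℕ)] : Measure (EuclideanSpace ℝ (Fin (k + 1)))) = C • volume :=
      ⟨_, Measure.isAddLeftInvariant_eq_smul _ _⟩
    refine ⟨C, fun η i ↦ ?_⟩
    calc μH[(k + 1 : ℕ)] (thinBox (k + 1) η ∩ {z | z i.succ = 0})
        ≤ μH[(k + 1 : ℕ)] (graphMap i.succ 0 '' thinBox k η) :=
          measure_mono (thinBox_inter_subset_image_graphMap i)
      _ ≤ μH[(k + 1 : ℕ)] (thinBox k η) := hausdorffMeasure_image_graphMap_zero_le _ _
      _ = C * η := by rw [hC, Measure.smul_apply, volume_thinBox, ENNReal.smul_def, smul_eq_mul]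

lemma lipschitzWith_mul_one_sub_coordSum (m : ℕ) (η : ℝ≥0) :
    LipschitzWith (η * ‖coordSum m‖₊) fun y ↦ η * (1 - coordSum m y) := by
  have hlip : LipschitzWith ‖coordSum m‖₊ fun y ↦ 1 - coordSum m y := by
    simpa using (LipschitzWith.const (1 : ℝ)).sub (coordSum m).lipschitz
  simpa [Function.comp_def] using (lipschitzWith_smul (η : ℝ)).comp hlip

lemma frontier_thinSimplex_subset : frontier (thinSimplex m η) ⊆
    (graphMap 0 0 '' closure (cornerSimplex m) ∪
      graphMap 0 (fun y ↦ η * (1 - coordSum m y)) '' closure (cornerSimplex m)) ∪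
    ⋃ i : Fin m, thinBox m η ∩ {z | z i.succ = 0} := by
  rw [isOpen_thinSimplex.frontier_eq]
  rintro z ⟨hz, hnotMem⟩
  obtain ⟨hbase, hbottom, htop⟩ := closure_thinSimplex_subset hz
  by_contra hcover
  simp only [mem_union, mem_iUnion, not_or, not_exists] at hcover
  obtain ⟨⟨hne_bottom, hne_top⟩, hne_side⟩ := hcover
  have hpos : 0 < z 0 := hbottom.lt_of_ne' fun h ↦ hne_bottom (mem_image_graphMap hbase h)
  have hlt : z 0 < η * (1 - coordSum m (splitCoord 0 z).1) :=
    htop.lt_of_ne fun h ↦ hne_top (mem_image_graphMap hbase h)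
  have hside (i : Fin m) : 0 < z i.succ :=
    ((closure_cornerSimplex_subset hbase).1 i).lt_of_ne' fun h ↦
      hne_side i ⟨closure_thinSimplex_subset_thinBox hz, h⟩
  have hsum : coordSum m (splitCoord 0 z).1 < 1 :=
    sub_pos.1 (pos_of_mul_pos_right (hpos.trans hlt) η.coe_nonneg)
  exact hnotMem ⟨⟨hside, hsum⟩, hpos, hlt⟩

lemma exists_setLIntegral_thinBox_inter_le (m : ℕ) :
    ∃ C : ℝ≥0, ∀ (η : ℝ≥0) (i : Fin m) {F : EuclideanSpace ℝ (Fin m) → ℝ≥0∞} {M : ℝ≥0},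
      (∀ y, (∀ j, 0 ≤ y j) → F y ≤ M) →
      ∫⁻ z in thinBox m η ∩ {z | z i.succ = 0}, F (splitCoord 0 z).1 ∂μH[m] ≤ M * (C * η) := by
  obtain ⟨C, hC⟩ := exists_hausdorffMeasure_thinBox_inter_le m
  refine ⟨C, fun η i F M hM ↦ ?_⟩
  have hmeas : MeasurableSet (thinBox m η ∩ {z | z i.succ = 0}) :=
    (isClosed_preimage_ofLp_Icc _ _).measurableSet.inter
      (isClosed_eq (by fun_prop) continuous_const).measurableSet
  calc ∫⁻ z in thinBox m η ∩ {z | z i.succ = 0}, F (splitCoord 0 z).1 ∂μH[m]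
      ≤ ∫⁻ _ in thinBox m η ∩ {z | z i.succ = 0}, M ∂μH[m] :=
        setLIntegral_mono' hmeas fun z hz ↦ hM _ fun j ↦ hz.1.1 j.succ
    _ ≤ M * (C * η) := by
        rw [setLIntegral_const]
        gcongr
        exact hC η i

lemma exists_setLIntegral_frontier_thinSimplex_le (m : ℕ) :
    ∃ C : ℝ≥0, ∀ (η : ℝ≥0) {F : EuclideanSpace ℝ (Fin m) → ℝ≥0∞} {M : ℝ≥0}, Measurable F →
      (∀ y, (∀ i, 0 ≤ y i) → F y ≤ M) →
      ∫⁻ z in frontier (thinSimplex m η), F (splitCoord 0 z).1 ∂μH[m] ≤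
        (1 + (1 + η * ‖coordSum m‖₊ : ℝ≥0) ^ m : ℝ≥0) * ∫⁻ y in cornerSimplex m, F y ∂μH[m] +
          (C * η * M : ℝ≥0) := by
  obtain ⟨C, hside⟩ := exists_setLIntegral_thinBox_inter_le m
  refine ⟨m * C, fun η F M hF hM ↦ ?_⟩
  have hbottom := setLIntegral_image_graphMap_le (h := 0) 0 (LipschitzWith.const 0)
    (closure (cornerSimplex m)) hF
  have htop := setLIntegral_image_graphMap_le 0 (lipschitzWith_mul_one_sub_coordSum m η)
    (closure (cornerSimplex m)) hF
  rw [setLIntegral_closure_of_convex _ convex_cornerSimplex] at hbottom htop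
  calc ∫⁻ z in frontier (thinSimplex m η), F (splitCoord 0 z).1 ∂μH[m]
      ≤ (∫⁻ z in graphMap 0 0 '' closure (cornerSimplex m), F (splitCoord 0 z).1 ∂μH[m] +
          ∫⁻ z in graphMap 0 (fun y ↦ η * (1 - coordSum m y)) '' closure (cornerSimplex m),
            F (splitCoord 0 z).1 ∂μH[m]) +
          ∑' i : Fin m, ∫⁻ z in thinBox m η ∩ {z | z i.succ = 0}, F (splitCoord 0 z).1 ∂μH[m] :=
        (lintegral_mono_set frontier_thinSimplex_subset).trans <|
          (lintegral_union_le _ _ _).trans <|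
            add_le_add (lintegral_union_le _ _ _) (lintegral_iUnion_le _ _)
    _ ≤ _ := add_le_add (add_le_add hbottom htop) (ENNReal.tsum_le_tsum fun i ↦ hside η i hM)
    _ = _ := by
        rw [tsum_fintype, Finset.sum_const, Finset.card_univ, Fintype.card_fin, nsmul_eq_mul]
        push_cast
        ring

lemma hausdorffMeasure_frontier_thinSimplex_ne_top : μH[m] (frontier (thinSimplex m η)) ≠ ∞ := by
  obtain ⟨C, hC⟩ := exists_setLIntegral_frontier_thinSimplex_le m
  have hle := hC η (F := 1) (M := 1) measurable_one fun _ _ ↦ le_rfl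
  simp only [Pi.one_apply, setLIntegral_one] at hle
  exact (hle.trans_lt (ENNReal.add_lt_top.2 ⟨ENNReal.mul_lt_top ENNReal.coe_lt_top
    (measure_cornerSimplex_ne_top μH[m]).lt_top, ENNReal.coe_lt_top⟩)).ne

lemma two_mul_measureReal_cornerSimplex_le_frontier (hη : 0 < η) :
    2 * (μH[m] : Measure (EuclideanSpace ℝ (Fin m))).real (cornerSimplex m) ≤
      (μH[m] : Measure (EuclideanSpace ℝ (Fin (m + 1)))).real (frontier (thinSimplex m η)) := by
  have hle := two_mul_hausdorffMeasure_le_frontier (f := 0) 0 measurable_zero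
    fun y hy ↦ mul_one_sub_coordSum_pos (m := m) hη hy
  simpa [measureReal_def] using
    ENNReal.toReal_mono hausdorffMeasure_frontier_thinSimplex_ne_top hle

lemma exists_setIntegral_frontier_thinSimplex_le (m : ℕ) :
    ∃ C : ℝ≥0, ∀ (η : ℝ≥0) {F : EuclideanSpace ℝ (Fin m) → ℝ} {M : ℝ≥0}, Continuous F →
      (∀ y, 0 ≤ F y) → (∀ y, (∀ i, 0 ≤ y i) → F y ≤ M) →
      ∫ z in frontier (thinSimplex m η), F (splitCoord 0 z).1 ∂μH[m] ≤
        (1 + (1 + η * ‖coordSum m‖) ^ m) * ∫ y in cornerSimplex m, F y ∂μH[m] + C * η * M := by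
  obtain ⟨C, hC⟩ := exists_setLIntegral_frontier_thinSimplex_le m
  refine ⟨C, fun η F M hF hnonneg hM ↦ ?_⟩
  have hle := hC η (F := fun y ↦ ENNReal.ofReal (F y)) (by fun_prop) fun y hy ↦
    ENNReal.ofReal_le_of_le_toReal (hM y hy)
  have hint := integrableOn_cornerSimplex_of_continuous μH[m] hF
  rw [← ofReal_integral_eq_lintegral_ofReal hint (ae_of_all _ hnonneg)] at hle
  have hcomp : Continuous fun z ↦ F (splitCoord 0 z).1 :=
    hF.comp (continuous_fst.comp (splitCoord 0).continuous)
  rw [integral_eq_lintegral_of_nonneg_ae (ae_of_all _ fun z ↦ hnonneg _)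
    hcomp.aestronglyMeasurable]
  have hI : 0 ≤ ∫ y in cornerSimplex m, F y ∂μH[m] := integral_nonneg hnonneg
  refine ENNReal.toReal_le_of_le_ofReal (by positivity) (hle.trans_eq ?_)
  rw [ENNReal.ofReal_add (by positivity) (by positivity), ENNReal.ofReal_mul (by positivity)]
  congr 1
  · congr 1
    exact ENNReal.ofReal_coe_nnreal.symm
  · exact ENNReal.ofReal_coe_nnreal.symm

lemma eventually_setAverage_frontier_thinSimplex_le {F : EuclideanSpace ℝ (Fin m) → ℝ} {M : ℝ≥0}
    (hF : Continuous F) (hnonneg : ∀ y, 0 ≤ F y) (hM : ∀ y, (∀ i, 0 ≤ y i) → F y ≤ M) {a : ℝ}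
    (ha : ⨍ y in cornerSimplex m, F y ∂μH[m] < a) :
    ∀ᶠ η in 𝓝[>] 0, ⨍ z in frontier (thinSimplex m η), F (splitCoord 0 z).1 ∂μH[m] ≤ a := by
  obtain ⟨C, hC⟩ := exists_setIntegral_frontier_thinSimplex_le m
  set v := (μH[m] : Measure (EuclideanSpace ℝ (Fin m))).real (cornerSimplex m)
  set I := ∫ y in cornerSimplex m, F y ∂μH[m]
  have hv : 0 < v := measureReal_cornerSimplex_pos _
  have hIa : I < v * a := by rwa [setAverage_eq, smul_eq_mul, inv_mul_lt_iff₀ hv] at ha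
  have ha0 : 0 ≤ a := by
    have hI : 0 ≤ I := integral_nonneg hnonneg
    exact (pos_of_mul_pos_right (hI.trans_lt hIa) hv.le).le
  have hlim : Tendsto (fun η : ℝ≥0 ↦ (1 + (1 + η * ‖coordSum m‖) ^ m) * I + C * η * M) (𝓝[>] 0)
      (𝓝 (2 * I)) :=
    tendsto_nhdsWithin_of_tendsto_nhds
      (Continuous.tendsto' (by fun_prop) _ _ (by norm_num))
  filter_upwards [hlim.eventually_lt_const (mul_lt_mul_of_pos_left hIa two_pos),
    self_mem_nhdsWithin] with η hlt hη
  have hfrontier := two_mul_measureReal_cornerSimplex_le_frontier (m := m) hη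
  rw [setAverage_eq, smul_eq_mul, inv_mul_le_iff₀ (by linarith)]
  calc ∫ z in frontier (thinSimplex m η), F (splitCoord 0 z).1 ∂μH[m]
      ≤ 2 * (v * a) := (hC η hF hnonneg hM).trans hlt.le
    _ = 2 * v * a := by ring
    _ ≤ _ := by gcongr

end ThinSimplex

/-! ### Convex functions concentrated at a vertex -/

section Concentration

variable {m : ℕ}

lemma setIntegral_posPart_sub_coordSum_pos (μ : Measure (EuclideanSpace ℝ (Fin m)))
    [μ.IsAddHaarMeasure] {δ : ℝ} (hδ : 0 < δ) :
    0 < ∫ y in cornerSimplex m, max (δ - coordSum m y) 0 ∂μ := by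
  have hnonneg : 0 ≤ᵐ[μ.restrict (cornerSimplex m)] fun y ↦ max (δ - coordSum m y) 0 :=
    ae_of_all _ fun _ ↦ le_max_right _ _
  rw [setIntegral_pos_iff_support_of_nonneg_ae hnonneg
    (integrableOn_cornerSimplex_of_continuous μ (by fun_prop))]
  obtain ⟨y, hy, hlt⟩ := exists_mem_cornerSimplex_coordSum_lt (m := m) hδ
  have hopen : IsOpen (cornerSimplex m ∩ {y | coordSum m y < δ}) :=
    isOpen_cornerSimplex.inter (isOpen_lt (by fun_prop) continuous_const)
  refine (hopen.measure_pos μ ⟨y, hy, hlt⟩).trans_le (measure_mono fun x hx ↦ ⟨?_, hx.1⟩)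
  exact (lt_max_of_lt_left (sub_pos.2 hx.2)).ne'

lemma setIntegral_coordSum_mul_posPart_add_le (μ : Measure (EuclideanSpace ℝ (Fin m)))
    [μ.IsAddHaarMeasure] (δ : ℝ) {τ : ℝ} (hτ : 0 ≤ τ) :
    ∫ y in cornerSimplex m, coordSum m y * (max (δ - coordSum m y) 0 + τ) ∂μ ≤
      δ * ∫ y in cornerSimplex m, max (δ - coordSum m y) 0 ∂μ + τ * μ.real (cornerSimplex m) := by
  have hpointwise : ∀ y ∈ cornerSimplex m, coordSum m y * (max (δ - coordSum m y) 0 + τ) ≤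
      δ * max (δ - coordSum m y) 0 + τ := by
    intro y hy
    have hbump : coordSum m y * max (δ - coordSum m y) 0 ≤ δ * max (δ - coordSum m y) 0 := by
      rcases le_total (coordSum m y) δ with hle | hle
      · gcongr
      · simp [max_eq_right (sub_nonpos.2 hle)]
    linarith [mul_le_of_le_one_left hτ hy.2.le]
  calc ∫ y in cornerSimplex m, coordSum m y * (max (δ - coordSum m y) 0 + τ) ∂μ
      ≤ ∫ y in cornerSimplex m, (δ * max (δ - coordSum m y) 0 + τ) ∂μ :=
        setIntegral_mono_on (integrableOn_cornerSimplex_of_continuous μ (by fun_prop))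
          (integrableOn_cornerSimplex_of_continuous μ (by fun_prop))
          isOpen_cornerSimplex.measurableSet hpointwise
    _ = _ := by
        rw [integral_add (integrableOn_cornerSimplex_of_continuous μ (by fun_prop))
          (integrableOn_cornerSimplex_of_continuous μ (by fun_prop)), integral_const_mul,
          setIntegral_const, smul_eq_mul, mul_comm τ]

lemma exists_convexOn_setIntegral_coordSum_mul_lt (μ : Measure (EuclideanSpace ℝ (Fin m)))
    [μ.IsAddHaarMeasure] {ε : ℝ} (hε : 0 < ε) :
    ∃ (F : EuclideanSpace ℝ (Fin m) → ℝ) (M : ℝ≥0), Continuous F ∧ ConvexOn ℝ univ F ∧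
      (∀ y, 0 < F y) ∧ (∀ y, (∀ i, 0 ≤ y i) → F y ≤ M) ∧
      ∫ y in cornerSimplex m, coordSum m y * F y ∂μ < ε * ∫ y in cornerSimplex m, F y ∂μ := by
  -- `F` is a tent of height `ε / 2` at the vertex `0`, lifted slightly to be positive.
  set v := μ.real (cornerSimplex m)
  set J := ∫ y in cornerSimplex m, max (ε / 2 - coordSum m y) 0 ∂μ
  have hv : 0 < v := measureReal_cornerSimplex_pos μ
  have hJ : 0 < J := setIntegral_posPart_sub_coordSum_pos μ (half_pos hε)
  obtain ⟨τ, hτ, hτv⟩ : ∃ τ > 0, τ * v = ε * J / 4 :=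
    ⟨ε * J / 4 / v, by positivity, div_mul_cancel₀ _ hv.ne'⟩
  refine ⟨fun y ↦ max (ε / 2 - coordSum m y) 0 + τ, (ε / 2 + τ).toNNReal, by fun_prop, ?_,
    fun y ↦ add_pos_of_nonneg_of_pos (le_max_right _ _) hτ, fun y hy ↦ ?_, ?_⟩
  · have hlin : ConvexOn ℝ univ fun y ↦ ε / 2 - coordSum m y :=
      (convexOn_const _ convex_univ).sub ((coordSum m).toLinearMap.concaveOn convex_univ)
    exact (hlin.sup (convexOn_const 0 convex_univ)).add_const τ
  · refine (add_le_add_left (max_le ?_ (half_pos hε).le) τ).trans (Real.le_coe_toNNReal _)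
    exact sub_le_self _ (coordSum_nonneg hy)
  · have hint : ∫ y in cornerSimplex m, (max (ε / 2 - coordSum m y) 0 + τ) ∂μ = J + τ * v := by
      rw [integral_add (integrableOn_cornerSimplex_of_continuous μ (by fun_prop))
        (integrableOn_cornerSimplex_of_continuous μ (by fun_prop)), setIntegral_const, smul_eq_mul,
        mul_comm τ]
    rw [hint]
    nlinarith [setIntegral_coordSum_mul_posPart_add_le μ (ε / 2) hτ.le, mul_pos hε hJ,
      mul_pos hε (mul_pos hτ hv)]

end Concentration

lemma exists_mul_setAverage_frontier_thinSimplex_le {m : ℕ}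
    (ν : Measure (EuclideanSpace ℝ (Fin (m + 1)))) [ν.IsAddHaarMeasure] {r : ℝ} (hr₀ : 0 ≤ r)
    (hr : r < m + 1) :
    ∃ (η : ℝ≥0) (F : EuclideanSpace ℝ (Fin m) → ℝ), 0 < η ∧ ConvexOn ℝ univ F ∧ (∀ y, 0 < F y) ∧
      r * ⨍ z in frontier (thinSimplex m η), F (splitCoord 0 z).1 ∂μH[m] ≤
        ⨍ z in thinSimplex m η, F (splitCoord 0 z).1 ∂ν := by
  have hm : (0 : ℝ) < m + 1 := by positivity
  obtain ⟨F, M, hF, hconvex, hpos, hM, hconc⟩ := exists_convexOn_setIntegral_coordSum_mul_lt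
    (m := m) μH[m] (sub_pos.2 ((div_lt_one hm).2 hr))
  have hmean : r * ⨍ y in cornerSimplex m, F y ∂μH[m] <
      (m + 1) * ⨍ y in cornerSimplex m, (1 - coordSum m y) * F y ∂μH[m] := by
    simp only [sub_mul, one_mul] at hconc ⊢
    rw [setAverage_eq, setAverage_eq, integral_sub
      (integrableOn_cornerSimplex_of_continuous μH[m] hF)
      (integrableOn_cornerSimplex_of_continuous μH[m] (by fun_prop)), smul_eq_mul, smul_eq_mul,
      mul_left_comm r, mul_left_comm (m + 1 : ℝ)]
    refine mul_lt_mul_of_pos_left ?_ (inv_pos.2 (measureReal_cornerSimplex_pos μH[m]))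
    rw [← div_lt_iff₀' hm, mul_div_right_comm]
    exact lt_sub_comm.1 hconc
  have hlim : Tendsto (fun a ↦ r * a) (𝓝[>] ⨍ y in cornerSimplex m, F y ∂μH[m])
      (𝓝 (r * ⨍ y in cornerSimplex m, F y ∂μH[m])) :=
    tendsto_nhdsWithin_of_tendsto_nhds (continuous_const_mul r).continuousAt
  obtain ⟨a, hra, ha⟩ := ((hlim.eventually_lt_const hmean).and self_mem_nhdsWithin).exists
  obtain ⟨η, hη, hη₀⟩ := ((eventually_setAverage_frontier_thinSimplex_le hF (fun y ↦ (hpos y).le)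
    hM ha).and self_mem_nhdsWithin).exists
  refine ⟨η, F, hη₀, hconvex, hpos, ?_⟩
  rw [setAverage_thinSimplex_comp_splitCoord hη₀ ν μH[m] hF.measurable]
  exact (mul_le_mul_of_nonneg_left hη hr₀).trans hra.le

end HermiteHadamard

open HermiteHadamard in
theorem hermite_hadamard_constant_lower_bound_general
    (n : ℕ) (hn : 1 ≤ n) (ε : ℝ) (hε : 0 < ε) :
    ∃ (Ω : Set (EuclideanSpace ℝ (Fin n))) (f : EuclideanSpace ℝ (Fin n) → ℝ),
      IsOpen Ω ∧ Bornology.IsBounded Ω ∧ Convex ℝ Ω ∧ (interior Ω).Nonempty ∧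
      ConvexOn ℝ (closure Ω) f ∧ (∀ x ∈ closure Ω, 0 < f x) ∧
      ((n : ℝ) - ε) *
          ((1 / (μH[(n : ℝ) - 1] (frontier Ω)).toReal) *
            ∫ x in frontier Ω, f x ∂μH[(n : ℝ) - 1]) ≤
        (1 / (volume Ω).toReal) * ∫ x in Ω, f x := by
  obtain ⟨m, rfl⟩ := Nat.exists_eq_add_of_le' hn
  obtain ⟨η, F, hη, hconvex, hpos, hle⟩ := exists_mul_setAverage_frontier_thinSimplex_le
    (m := m) volume (le_max_left 0 (m + 1 - ε)) (max_lt (by positivity) (sub_lt_self _ hε))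
  refine ⟨thinSimplex m η, fun z ↦ F (splitCoord 0 z).1, isOpen_thinSimplex,
    isBounded_thinSimplex, convex_thinSimplex, ?_, ?_, fun z _ ↦ hpos _, ?_⟩
  · rw [isOpen_thinSimplex.interior_eq]
    exact thinSimplex_nonempty hη
  · exact (hconvex.comp_linearMap
      (LinearMap.fst ℝ _ ℝ ∘ₗ (splitCoord 0).toLinearMap)).subset (subset_univ _)
      convex_thinSimplex.closure
  · have hfrontier : 0 ≤ ⨍ z in frontier (thinSimplex m η), F (splitCoord 0 z).1 ∂μH[m] :=
      integral_nonneg fun z ↦ (hpos _).le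
    have hmain := (mul_le_mul_of_nonneg_right (le_max_right 0 (m + 1 - ε)) hfrontier).trans hle
    simpa [setAverage_eq, measureReal_def] using hmain

/-- Lower bound for the optimal Hermite–Hadamard constant: in every dimension `n ≥ 2`
and for every `ε > 0` there is a bounded open convex domain `Ω ⊂ ℝⁿ` and a positive
convex function `f` on its closure whose mean over `Ω` is at least `(n - 1 - ε)` times
its mean over `∂Ω`. Hence the optimal constant `c_n` satisfies `c_n ≥ n - 1`. -/
theorem hermite_hadamard_constant_lower_bound
    (n : ℕ) (hn : 2 ≤ n) (ε : ℝ) (hε : 0 < ε) :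
    ∃ (Ω : Set (EuclideanSpace ℝ (Fin n))) (f : EuclideanSpace ℝ (Fin n) → ℝ),
      IsOpen Ω ∧ Bornology.IsBounded Ω ∧ Convex ℝ Ω ∧ (interior Ω).Nonempty ∧
      ConvexOn ℝ (closure Ω) f ∧ (∀ x ∈ closure Ω, 0 < f x) ∧
      ((n : ℝ) - 1 - ε) *
          ((1 / (μH[(n : ℝ) - 1] (frontier Ω)).toReal) *
            ∫ x in frontier Ω, f x ∂μH[(n : ℝ) - 1]) ≤
        (1 / (volume Ω).toReal) * ∫ x in Ω, f x := by
  simpa only [sub_sub] using hermite_hadamard_constant_lower_bound_general n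
    (one_le_two.trans hn) (1 + ε) (by positivity)
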